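/- The category Z_f(G,α) of objects of Z(G,α) supported on the conjugacy class of f is equivalent, as a k-linear category, to the category of left modules over the twisted group algebra k[C_G(f), α(·,·|f)^{-1}], via the functor Z ↦ Z_f (taking the degree-f component). -/

import Mathlib

open CategoryTheory
open scoped BigOperators

/-- `α(g,h|f) = α(g,h,f)⁻¹ · α(g, hfh⁻¹, h) · α((gh)f(gh)⁻¹, g, h)⁻¹`. -/
def aux2 {G : Type} [Group G] {k : Type} [Field k]
    (α : G → G → G → kˣ) (g h f : G) : kˣ :=
  (α g h f)⁻¹ * α g (h * f * h⁻¹) h * (α ((g * h) * f * (g * h)⁻¹) g h)⁻¹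

variable (k : Type) [Field k] (G : Type) [Group G] [Fintype G]
  (α : G → G → G → kˣ) (f : G)

/-- An object of `Z_f(G,α)`: an object of `Z(G,α)` supported on the conjugacy class
of `f`. -/
structure ZfObj where
  V : Type
  [ac : AddCommGroup V]
  [mo : Module k V]
  p : G → V →ₗ[k] V
  p_idem : ∀ g, p g ∘ₗ p g = p g
  p_orth : ∀ g h, g ≠ h → p g ∘ₗ p h = 0
  p_total : ∑ g : G, p g = LinearMap.id
  ρ : G → V →ₗ[k] V
  ρ_one : ρ 1 = LinearMap.id
  ρ_bij : ∀ g, Function.Bijective (ρ g)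
  grade : ∀ g h, ρ g ∘ₗ p h = p (g * h * g⁻¹) ∘ₗ ρ g
  proj : ∀ g h x, ρ (g * h) ∘ₗ p x
    = ((aux2 α g h x : kˣ) : k) • ((ρ g ∘ₗ ρ h) ∘ₗ p x)
  supp : ∀ h : G, ¬ IsConj f h → p h = 0

attribute [instance] ZfObj.ac ZfObj.mo

variable {k G α f}

/-- A morphism of `Z_f(G,α)`: a linear map preserving the grading and the action. -/
@[ext]
structure ZfHom (Z W : ZfObj k G α f) where
  φ : Z.V →ₗ[k] W.V
  comm_p : ∀ h, φ ∘ₗ Z.p h = W.p h ∘ₗ φ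
  comm_ρ : ∀ g, φ ∘ₗ Z.ρ g = W.ρ g ∘ₗ φ

instance : Category (ZfObj k G α f) where
  Hom Z W := ZfHom Z W
  id Z := ⟨LinearMap.id, fun h => by simp, fun g => by simp⟩
  comp {Z W U} a b := ⟨b.φ ∘ₗ a.φ,
    fun h => by
      rw [LinearMap.comp_assoc, a.comm_p, ← LinearMap.comp_assoc, b.comm_p,
        LinearMap.comp_assoc],
    fun g => by
      rw [LinearMap.comp_assoc, a.comm_ρ, ← LinearMap.comp_assoc, b.comm_ρ,
        LinearMap.comp_assoc]⟩
  id_comp a := by apply ZfHom.ext; simp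
  comp_id a := by apply ZfHom.ext; simp
  assoc a b c := by apply ZfHom.ext; simp [LinearMap.comp_assoc]

/-- A module over the twisted group algebra `k[C_G(f), α(·,·|f)⁻¹]`: a vector space
`M` with operators `u_g`, `g ∈ C_G(f)`, satisfying `u_e = id` and
`u_g u_h = α(g,h|f)⁻¹ u_{gh}`. -/
structure RepObj (k : Type) [Field k] (G : Type) [Group G]
    (α : G → G → G → kˣ) (f : G) where
  M : Type
  [ac : AddCommGroup M]
  [mo : Module k M]
  u : Subgroup.centralizer {f} → M →ₗ[k] M
  u_one : u 1 = LinearMap.id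
  u_mul : ∀ g h : Subgroup.centralizer {f},
    u g ∘ₗ u h = (((aux2 α (g : G) (h : G) f)⁻¹ : kˣ) : k) • u (g * h)

attribute [instance] RepObj.ac RepObj.mo

/-- A morphism of modules over the twisted group algebra: a linear map commuting
with the operators `u_g`. -/
@[ext]
structure RepHom (M N : RepObj k G α f) where
  φ : M.M →ₗ[k] N.M
  comm_u : ∀ g, φ ∘ₗ M.u g = N.u g ∘ₗ φ

instance : Category (RepObj k G α f) where
  Hom M N := RepHom M N
  id M := ⟨LinearMap.id, fun g => by simp⟩
  comp {M N P} a b := ⟨b.φ ∘ₗ a.φ,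
    fun g => by
      rw [LinearMap.comp_assoc, a.comm_u, ← LinearMap.comp_assoc, b.comm_u,
        LinearMap.comp_assoc]⟩
  id_comp a := by apply RepHom.ext; simp
  comp_id a := by apply RepHom.ext; simp
  assoc a b c := by apply RepHom.ext; simp [LinearMap.comp_assoc]

/-- Elements of the centralizer of `f` preserve the degree-`f` component. -/
theorem mapsTo_range_p (Z : ZfObj k G α f) (g : Subgroup.centralizer {f}) :
    ∀ x ∈ LinearMap.range (Z.p f), Z.ρ (g : G) x ∈ LinearMap.range (Z.p f) := by
  intro x hx
  obtain ⟨y, rfl⟩ := hx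
  have hgf : (g : G) * f * (g : G)⁻¹ = f := by
    have := g.2 f (Set.mem_singleton f)
    rw [mul_inv_eq_iff_eq_mul, this]
  have := congrArg (fun (ψ : Z.V →ₗ[k] Z.V) => ψ y) (Z.grade (g : G) f)
  simp only [LinearMap.comp_apply] at this
  rw [this, hgf]
  exact ⟨_, rfl⟩

/-- A linear map preserving gradings restricts to degree-`f` components. -/
theorem mapsTo_range_hom {Z W : ZfObj k G α f} (a : ZfHom Z W) :
    ∀ x ∈ LinearMap.range (Z.p f), a.φ x ∈ LinearMap.range (W.p f) := by
  intro x hx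
  obtain ⟨y, rfl⟩ := hx
  have := congrArg (fun (ψ : Z.V →ₗ[k] W.V) => ψ y) (a.comm_p f)
  simp only [LinearMap.comp_apply] at this
  rw [this]
  exact ⟨_, rfl⟩

set_option maxHeartbeats 1000000 in
/-- The functor `Z ↦ Z_f` taking an object of `Z_f(G,α)` to its degree-`f`
component, a module over the twisted group algebra `k[C_G(f), α(·,·|f)⁻¹]`, and a
morphism to its restriction. -/
noncomputable def Dfun : ZfObj k G α f ⥤ RepObj k G α f where
  obj Z :=
    { M := LinearMap.range (Z.p f)
      u := fun g => (Z.ρ (g : G)).restrict (mapsTo_range_p Z g)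
      u_one := by
        ext x
        simp [LinearMap.restrict_apply, Z.ρ_one]
      u_mul := by
        intro g h
        ext ⟨x, hx⟩
        obtain ⟨y, rfl⟩ := hx
        have hproj := congrArg (fun (ψ : Z.V →ₗ[k] Z.V) => ψ (Z.p f y))
          (Z.proj (g : G) (h : G) f)
        simp only [LinearMap.comp_apply, LinearMap.smul_apply] at hproj
        have hidem : Z.p f (Z.p f y) = Z.p f y := by
          have := congrArg (fun (ψ : Z.V →ₗ[k] Z.V) => ψ y) (Z.p_idem f)
          simpa using this
        rw [hidem] at hproj
        simp only [LinearMap.comp_apply, LinearMap.smul_apply, LinearMap.restrict_apply,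
          SetLike.val_smul, Subgroup.coe_mul]
        rw [hproj, smul_smul, ← Units.val_mul, inv_mul_cancel, Units.val_one, one_smul] }
  map {Z W} a :=
    { φ := a.φ.restrict (mapsTo_range_hom a)
      comm_u := by
        intro g
        ext ⟨x, hx⟩
        have := congrArg (fun (ψ : Z.V →ₗ[k] W.V) => ψ x) (a.comm_ρ (g : G))
        simp only [LinearMap.comp_apply] at this
        simp only [LinearMap.comp_apply, LinearMap.restrict_apply]
        exact this }
  map_id Z := by
    apply RepHom.ext
    ext x
    rfl
  map_comp a b := by
    apply RepHom.ext
    ext x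
    rfl

theorem tau_coc
    (hcoc : ∀ f g h l : G,
      α g h l * α f (g * h) l * α f g h = α (f * g) h l * α f g (h * l)) (g h l x : G) :
    aux2 α (g * h) l x * aux2 α g h (l * x * l⁻¹) = aux2 α g (h * l) x * aux2 α h l x := by
  have H1 := hcoc g h l x
  have H2 := hcoc g h (l * x * l⁻¹) l
  have H3 := hcoc g (h * (l * x * l⁻¹) * h⁻¹) h l
  have H4 := hcoc (g * (h * (l * x * l⁻¹) * h⁻¹) * g⁻¹) g h l
  simp only [aux2]
  simp only [mul_assoc, mul_inv_rev, inv_mul_cancel_left, inv_mul_cancel, mul_one,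
    mul_inv_cancel_left] at H1 H2 H3 H4 ⊢
  apply Additive.ofMul.injective
  replace H1 := congrArg Additive.ofMul H1
  replace H2 := congrArg Additive.ofMul H2
  replace H3 := congrArg Additive.ofMul H3
  replace H4 := congrArg Additive.ofMul H4
  simp only [ofMul_mul, ofMul_inv] at H1 H2 H3 H4 ⊢
  linear_combination (norm := abel) H1 - H2 + H3 - H4

theorem tau_one_left (hnorm : ∀ f g h : G, f = 1 ∨ g = 1 ∨ h = 1 → α f g h = 1) (h x : G) :
    aux2 α 1 h x = 1 := by
  simp [aux2, hnorm]

theorem tau_one_right (hnorm : ∀ f g h : G, f = 1 ∨ g = 1 ∨ h = 1 → α f g h = 1) (h x : G) :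
    aux2 α h 1 x = 1 := by
  simp [aux2, hnorm]

theorem cent_conj (t : Subgroup.centralizer {f}) : (t : G) * f * (t : G)⁻¹ = f := by
  have := t.2 f (Set.mem_singleton f)
  rw [mul_inv_eq_iff_eq_mul, this]

/-! Facts on objects -/

theorem Z_pp (Z : ZfObj k G α f) (g : G) (v : Z.V) : Z.p g (Z.p g v) = Z.p g v :=
  LinearMap.congr_fun (Z.p_idem g) v

theorem Z_grade (Z : ZfObj k G α f) (g h : G) (v : Z.V) :
    Z.ρ g (Z.p h v) = Z.p (g * h * g⁻¹) (Z.ρ g v) :=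
  LinearMap.congr_fun (Z.grade g h) v

theorem Z_proj (Z : ZfObj k G α f) (g h x : G) (v : Z.V) :
    Z.ρ (g * h) (Z.p x v) = ((aux2 α g h x : kˣ) : k) • Z.ρ g (Z.ρ h (Z.p x v)) :=
  LinearMap.congr_fun (Z.proj g h x) v

theorem Z_ext (Z : ZfObj k G α f) {U : Type} [AddCommGroup U] [Module k U]
    (A B : Z.V →ₗ[k] U) (h : ∀ c v, A (Z.ρ c (Z.p f v)) = B (Z.ρ c (Z.p f v))) : A = B := by
  ext v
  have hv : v = ∑ g : G, Z.p g v := by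
    have := LinearMap.congr_fun Z.p_total v
    simpa using this.symm
  rw [hv, map_sum, map_sum]
  refine Finset.sum_congr rfl fun g _ => ?_
  by_cases hg : IsConj f g
  · obtain ⟨c, rfl⟩ := isConj_iff.1 hg
    obtain ⟨w, rfl⟩ := (Z.ρ_bij c).2 v
    rw [← Z_grade]
    exact h c w
  · simp [Z.supp g hg]

theorem Dfun_faithful : (Dfun : ZfObj k G α f ⥤ RepObj k G α f).Faithful where
  map_injective {Z W} a b hab := by
    apply ZfHom.ext
    apply Z_ext
    intro c v
    have ha := LinearMap.congr_fun (a.comm_ρ c) (Z.p f v)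
    have hb := LinearMap.congr_fun (b.comm_ρ c) (Z.p f v)
    simp only [LinearMap.comp_apply] at ha hb
    rw [ha, hb]
    have h1 := congrArg (fun r : RepHom (Dfun.obj Z) (Dfun.obj W) => r.φ) hab
    have h2 := LinearMap.congr_fun h1 (⟨Z.p f v, ⟨v, rfl⟩⟩ : LinearMap.range (Z.p f))
    have h3 : a.φ (Z.p f v) = b.φ (Z.p f v) := congrArg Subtype.val h2
    rw [h3]

/-- Chosen conjugating element. -/
noncomputable def cc (f h : G) : G := by
  classical exact if hh : ∃ c : G, c * f * c⁻¹ = h then hh.choose else 1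

theorem cc_spec (c f : G) : cc f (c * f * c⁻¹) * f * (cc f (c * f * c⁻¹))⁻¹ = c * f * c⁻¹ := by
  have hh : ∃ d : G, d * f * d⁻¹ = c * f * c⁻¹ := ⟨c, rfl⟩
  rw [cc, dif_pos hh]
  exact hh.choose_spec

/-- Extension of a linear map on degree-`f` components. -/
noncomputable def extMap {Z W : ZfObj k G α f}
    (ψ : LinearMap.range (Z.p f) →ₗ[k] LinearMap.range (W.p f)) : Z.V →ₗ[k] W.V :=
  ∑ h : G, W.ρ (cc f h) ∘ₗ (LinearMap.range (W.p f)).subtype ∘ₗ ψ ∘ₗ (Z.p f).rangeRestrict ∘ₗ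
    (LinearEquiv.ofBijective (Z.ρ (cc f h)) (Z.ρ_bij _)).symm.toLinearMap ∘ₗ Z.p h

theorem extMap_cc {Z W : ZfObj k G α f}
    (ψ : LinearMap.range (Z.p f) →ₗ[k] LinearMap.range (W.p f)) (c : G)
    (z : LinearMap.range (Z.p f)) :
    extMap ψ (Z.ρ (cc f (c * f * c⁻¹)) z) = W.ρ (cc f (c * f * c⁻¹)) (ψ z) := by
  obtain ⟨_, v, rfl⟩ := z
  rw [extMap, LinearMap.sum_apply, Finset.sum_eq_single (c * f * c⁻¹)]
  · simp only [LinearMap.comp_apply]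
    have h1 : Z.p (c * f * c⁻¹) (Z.ρ (cc f (c * f * c⁻¹)) (Z.p f v))
        = Z.ρ (cc f (c * f * c⁻¹)) (Z.p f v) := by
      rw [Z_grade, cc_spec, Z_pp]
    rw [h1]
    have h2 : (LinearEquiv.ofBijective (Z.ρ (cc f (c * f * c⁻¹))) (Z.ρ_bij _)).symm.toLinearMap
        (Z.ρ (cc f (c * f * c⁻¹)) (Z.p f v)) = Z.p f v :=
      LinearEquiv.ofBijective_symm_apply_apply _ _
    rw [h2]
    have h3 : (Z.p f).rangeRestrict (Z.p f v) = ⟨Z.p f v, ⟨v, rfl⟩⟩ := Subtype.ext (Z_pp Z f v)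
    rw [h3]
    rfl
  · intro h _ hne
    have h1 : Z.p h (Z.ρ (cc f (c * f * c⁻¹)) (Z.p f v)) = 0 := by
      rw [Z_grade, cc_spec]
      exact LinearMap.congr_fun (Z.p_orth _ _ hne) _
    simp only [LinearMap.comp_apply]
    rw [h1]
    simp
  · simp

theorem Z_proj' (Z : ZfObj k G α f) (g h : G) (z : LinearMap.range (Z.p f)) :
    Z.ρ (g * h) (z : Z.V) = ((aux2 α g h f : kˣ) : k) • Z.ρ g (Z.ρ h z) := by
  obtain ⟨_, v, rfl⟩ := z
  exact Z_proj Z g h f v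

theorem extMap_rho {Z W : ZfObj k G α f} 
    (ψ : LinearMap.range (Z.p f) →ₗ[k] LinearMap.range (W.p f))
    (hψ : ∀ (t : Subgroup.centralizer {f}) (z : LinearMap.range (Z.p f)),
      (ψ ⟨Z.ρ (t : G) z, mapsTo_range_p Z t z z.2⟩ : W.V) = W.ρ (t : G) (ψ z))
    (c : G) (z : LinearMap.range (Z.p f)) :
    extMap ψ (Z.ρ c z) = W.ρ c (ψ z) := by
  set d := cc f (c * f * c⁻¹) with hd
  have hds := cc_spec c f
  rw [← hd] at hds
  have ht : d⁻¹ * c ∈ Subgroup.centralizer {f} := by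
    rw [Subgroup.mem_centralizer_singleton_iff]
    have : f = d⁻¹ * (c * f * c⁻¹) * d := by rw [← hds]; group
    calc (d⁻¹ * c) * f = d⁻¹ * (c * f * c⁻¹) * d * (d⁻¹ * c) := by group
      _ = f * (d⁻¹ * c) := by rw [← this]
  let t : Subgroup.centralizer {f} := ⟨d⁻¹ * c, ht⟩
  have hc : c = d * (t : G) := by simp [t]
  have e1 := extMap_cc ψ c ⟨Z.ρ (t : G) z, mapsTo_range_p Z t z z.2⟩
  rw [← hd] at e1
  simp only at e1
  conv_lhs => rw [hc, Z_proj', map_smul, e1, hψ]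
  conv_rhs => rw [hc, Z_proj']

theorem Dfun_full : (Dfun : ZfObj k G α f ⥤ RepObj k G α f).Full where
  map_surjective {Z W} ψ := by
    obtain ⟨ψ', hψ'⟩ : ∃ ψ' : LinearMap.range (Z.p f) →ₗ[k] LinearMap.range (W.p f),
      ψ' = RepHom.φ ψ := ⟨RepHom.φ ψ, rfl⟩
    have key := extMap_rho ψ' (by
      intro t z
      rw [hψ']
      exact congrArg Subtype.val (LinearMap.congr_fun (RepHom.comm_u ψ t) z))
    refine ⟨⟨extMap ψ', ?_, ?_⟩, ?_⟩
    · intro h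
      apply Z_ext
      intro c v
      have k1 := key c ⟨Z.p f v, ⟨v, rfl⟩⟩
      simp only [LinearMap.comp_apply]
      simp only at k1
      rw [k1]
      obtain ⟨w, hw⟩ := (ψ' ⟨Z.p f v, ⟨v, rfl⟩⟩).2
      by_cases hh : h = c * f * c⁻¹
      · subst hh
        rw [← hw, Z_grade W, Z_pp, Z_grade Z, Z_pp, ← Z_grade Z, k1, ← hw, Z_grade W]
      · rw [← hw, Z_grade W, Z_grade Z]
        have o1 := LinearMap.congr_fun (Z.p_orth _ _ hh) (Z.ρ c v)
        have o2 := LinearMap.congr_fun (W.p_orth _ _ hh) (W.ρ c w)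
        simp only [LinearMap.comp_apply, LinearMap.zero_apply] at o1 o2
        rw [o1, o2, map_zero]
    · intro g
      apply Z_ext
      intro c v
      have k1 := key c ⟨Z.p f v, ⟨v, rfl⟩⟩
      have k2 := key (g * c) ⟨Z.p f v, ⟨v, rfl⟩⟩
      rw [Z_proj', Z_proj', map_smul] at k2
      simp only [LinearMap.comp_apply]
      rw [k1]
      exact smul_right_injective _ (Units.ne_zero (aux2 α g c f)) k2
    · apply RepHom.ext
      refine Eq.trans ?_ hψ'
      refine LinearMap.ext fun (z : LinearMap.range (Z.p f)) => Subtype.ext ?_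
      have k1 := key 1 z
      rw [Z.ρ_one, W.ρ_one] at k1
      exact k1

/-! Essential surjectivity -/

/-- Underlying space of the induced object. -/
def indV (M : RepObj k G α f) : Submodule k (G → M.M) where
  carrier := {F | ∀ (c : G) (t : Subgroup.centralizer {f}),
    ((aux2 α c (t : G) f : kˣ) : k) • M.u t (F (c * t)) = F c}
  add_mem' := by
    intro a b ha hb c t
    simp only [Pi.add_apply, map_add, smul_add]
    rw [ha c t, hb c t]
  zero_mem' := by
    intro c t
    simp
  smul_mem' := by
    intro r a ha c t
    simp only [Pi.smul_apply, map_smul]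
    rw [smul_comm, ha c t]

open Classical in
/-- Projection to degree `h`. -/
noncomputable def indP (M : RepObj k G α f) (h : G) : indV M →ₗ[k] indV M where
  toFun F := ⟨fun c => if c * f * c⁻¹ = h then (F : G → M.M) c else 0, by
    intro c t
    have : (c * (t : G)) * f * (c * (t : G))⁻¹ = c * f * c⁻¹ := by
      conv_rhs => rw [← cent_conj t]
      group
    simp only [this]
    split_ifs
    · exact F.2 c t
    · simp⟩
  map_add' a b := by
    apply Subtype.ext; funext c
    simp only [Submodule.coe_add, Pi.add_apply]
    split_ifs <;> simp
  map_smul' r a := by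
    apply Subtype.ext; funext c
    simp only [Submodule.coe_smul, Pi.smul_apply, RingHom.id_apply]
    split_ifs <;> simp

theorem tau_coc_t
    (hcoc : ∀ f g h l : G,
      α g h l * α f (g * h) l * α f g h = α (f * g) h l * α f g (h * l))
    (g d : G) (t : Subgroup.centralizer {f}) :
    aux2 α (g * d) t f * aux2 α g d f = aux2 α g (d * t) f * aux2 α d t f := by
  have := tau_coc hcoc g d t f
  rwa [cent_conj] at this

/-- Action on the induced object. -/
def indR (hcoc : ∀ f g h l : G,
      α g h l * α f (g * h) l * α f g h = α (f * g) h l * α f g (h * l))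
    (M : RepObj k G α f) (g : G) : indV M →ₗ[k] indV M where
  toFun F := ⟨fun c => (((aux2 α g (g⁻¹ * c) f)⁻¹ : kˣ) : k) • (F : G → M.M) (g⁻¹ * c), by
    intro c t
    have h1 := tau_coc_t hcoc g (g⁻¹ * c) t
    have h2 := F.2 (g⁻¹ * c) t
    simp only [map_smul]
    rw [← h2, smul_smul, smul_smul, ← Units.val_mul, ← Units.val_mul, ← mul_assoc g⁻¹]
    congr 2
    rw [mul_inv_cancel_left] at h1
    rw [mul_inv_eq_iff_eq_mul, mul_assoc, mul_comm (aux2 α (g⁻¹ * c) t f), ← h1]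
    rw [mul_comm, mul_inv_cancel_right]⟩
  map_add' a b := by
    apply Subtype.ext; funext c
    simp
  map_smul' r a := by
    apply Subtype.ext; funext c
    simp only [Submodule.coe_smul, Pi.smul_apply, RingHom.id_apply]
    rw [smul_comm]

/-- The inverse of the action on the induced object. -/
def indRinv (hcoc : ∀ f g h l : G,
      α g h l * α f (g * h) l * α f g h = α (f * g) h l * α f g (h * l))
    (M : RepObj k G α f) (g : G) (F : indV M) : indV M :=
  ⟨fun d => ((aux2 α g d f : kˣ) : k) • (F : G → M.M) (g * d), by
    intro d t
    have h1 := tau_coc_t hcoc g d t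
    have h2 := F.2 (g * d) t
    simp only [map_smul]
    rw [← h2, smul_smul, smul_smul, ← Units.val_mul, ← Units.val_mul, ← mul_assoc g]
    congr 2
    rw [mul_comm, ← h1, mul_comm]⟩

theorem indP_apply_pos (M : RepObj k G α f) (h : G) (F : indV M) (c : G)
    (hc : c * f * c⁻¹ = h) : (indP M h F : G → M.M) c = (F : G → M.M) c := if_pos hc

theorem indP_apply_neg (M : RepObj k G α f) (h : G) (F : indV M) (c : G)
    (hc : ¬ c * f * c⁻¹ = h) : (indP M h F : G → M.M) c = 0 := if_neg hc

/-- The induced object. -/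
noncomputable def indObj (hcoc : ∀ f g h l : G,
      α g h l * α f (g * h) l * α f g h = α (f * g) h l * α f g (h * l))
    (hnorm : ∀ f g h : G, f = 1 ∨ g = 1 ∨ h = 1 → α f g h = 1)
    (M : RepObj k G α f) : ZfObj k G α f where
  V := indV M
  p := indP M
  p_idem g := by
    refine LinearMap.ext fun F => Subtype.ext (funext fun c => ?_)
    rw [LinearMap.comp_apply]
    by_cases hc : c * f * c⁻¹ = g
    · rw [indP_apply_pos M g _ c hc]
    · rw [indP_apply_neg M g _ c hc, indP_apply_neg M g _ c hc]
  p_orth g h hgh := by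
    refine LinearMap.ext fun F => Subtype.ext (funext fun c => ?_)
    rw [LinearMap.comp_apply]
    by_cases hc : c * f * c⁻¹ = g
    · rw [indP_apply_pos M g _ c hc, indP_apply_neg M h _ c (fun h' => hgh (hc.symm.trans h'))]
      rfl
    · rw [indP_apply_neg M g _ c hc]
      rfl
  p_total := by
    refine LinearMap.ext fun F => Subtype.ext (funext fun c => ?_)
    rw [LinearMap.sum_apply, Submodule.coe_sum, Finset.sum_apply,
      Finset.sum_eq_single (c * f * c⁻¹)]
    · rw [indP_apply_pos M _ _ c rfl]
      rfl
    · intro h _ hh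
      exact indP_apply_neg M _ _ c hh.symm
    · simp
  ρ := indR hcoc M
  ρ_one := by
    refine LinearMap.ext fun F => Subtype.ext (funext fun c => ?_)
    change (((aux2 α 1 (1⁻¹ * c) f)⁻¹ : kˣ) : k) • (F : G → M.M) (1⁻¹ * c) = (F : G → M.M) c
    rw [tau_one_left hnorm]
    simp
  ρ_bij g := by
    constructor
    · intro F F' h
      refine Subtype.ext (funext fun c => ?_)
      have h1 := congrFun (congrArg Subtype.val h) (g * c)
      change (((aux2 α g (g⁻¹ * (g * c)) f)⁻¹ : kˣ) : k) • (F : G → M.M) (g⁻¹ * (g * c)) =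
        (((aux2 α g (g⁻¹ * (g * c)) f)⁻¹ : kˣ) : k) • (F' : G → M.M) (g⁻¹ * (g * c)) at h1
      rw [inv_mul_cancel_left] at h1
      exact smul_right_injective _ (Units.ne_zero _) h1
    · intro F
      refine ⟨indRinv hcoc M g F, Subtype.ext (funext fun c => ?_)⟩
      change (((aux2 α g (g⁻¹ * c) f)⁻¹ : kˣ) : k) • ((aux2 α g (g⁻¹ * c) f : kˣ) : k) •
        (F : G → M.M) (g * (g⁻¹ * c)) = (F : G → M.M) c
      rw [smul_smul, ← Units.val_mul, inv_mul_cancel, Units.val_one, one_smul,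
        mul_inv_cancel_left]
  grade g h := by
    refine LinearMap.ext fun F => Subtype.ext (funext fun c => ?_)
    rw [LinearMap.comp_apply, LinearMap.comp_apply]
    change (((aux2 α g (g⁻¹ * c) f)⁻¹ : kˣ) : k) • (indP M h F : G → M.M) (g⁻¹ * c) = _
    by_cases hc : (g⁻¹ * c) * f * (g⁻¹ * c)⁻¹ = h
    · rw [indP_apply_pos M h _ _ hc, indP_apply_pos M _ _ _ (by rw [← hc]; group)]
      rfl
    · rw [indP_apply_neg M h _ _ hc, indP_apply_neg M _ _ _, smul_zero]
      intro h'
      apply hc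
      calc (g⁻¹ * c) * f * (g⁻¹ * c)⁻¹ = g⁻¹ * (c * f * c⁻¹) * g := by group
        _ = h := by rw [h']; group
  proj g h x := by
    refine LinearMap.ext fun F => Subtype.ext (funext fun c => ?_)
    change (((aux2 α (g * h) ((g * h)⁻¹ * c) f)⁻¹ : kˣ) : k) •
      (indP M x F : G → M.M) ((g * h)⁻¹ * c) =
      ((aux2 α g h x : kˣ) : k) • (((aux2 α g (g⁻¹ * c) f)⁻¹ : kˣ) : k) •
        (((aux2 α h (h⁻¹ * (g⁻¹ * c)) f)⁻¹ : kˣ) : k) •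
          (indP M x F : G → M.M) (h⁻¹ * (g⁻¹ * c))
    obtain ⟨d, rfl⟩ : ∃ d, c = g * (h * d) := ⟨h⁻¹ * (g⁻¹ * c), by group⟩
    have e1 : (g * h)⁻¹ * (g * (h * d)) = d := by group
    rw [e1, inv_mul_cancel_left, inv_mul_cancel_left]
    by_cases hd : d * f * d⁻¹ = x
    · subst hd
      have h1 := tau_coc hcoc g h d f
      rw [smul_smul, smul_smul, ← Units.val_mul, ← Units.val_mul]
      congr 2
      rw [inv_eq_iff_mul_eq_one, mul_assoc, ← mul_inv, ← mul_assoc, h1, mul_inv_cancel]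
    · rw [indP_apply_neg M x _ _ hd]
      simp
  supp h hh := by
    refine LinearMap.ext fun F => Subtype.ext (funext fun c => ?_)
    refine indP_apply_neg M h _ c fun h' => hh (isConj_iff.2 ⟨c, h'⟩)

theorem u_injective
    (hnorm : ∀ f g h : G, f = 1 ∨ g = 1 ∨ h = 1 → α f g h = 1)
    (M : RepObj k G α f) (t : Subgroup.centralizer {f}) : Function.Injective (M.u t) := by
  intro a b hab
  have h1 := M.u_mul t⁻¹ t
  rw [inv_mul_cancel, M.u_one] at h1
  have ha := LinearMap.congr_fun h1 a
  have hb := LinearMap.congr_fun h1 b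
  simp only [LinearMap.comp_apply, LinearMap.smul_apply, LinearMap.id_apply] at ha hb
  rw [hab, hb] at ha
  exact (smul_right_injective _ (Units.ne_zero _) ha).symm

theorem u_surjective
    (hnorm : ∀ f g h : G, f = 1 ∨ g = 1 ∨ h = 1 → α f g h = 1)
    (M : RepObj k G α f) (t : Subgroup.centralizer {f}) : Function.Surjective (M.u t) := by
  intro a
  have h1 := M.u_mul t t⁻¹
  rw [mul_inv_cancel, M.u_one] at h1
  have ha := LinearMap.congr_fun h1 a
  simp only [LinearMap.comp_apply, LinearMap.smul_apply, LinearMap.id_apply] at ha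
  refine ⟨((aux2 α (t : G) ((t⁻¹ : Subgroup.centralizer {f}) : G) f : kˣ) : k) • M.u t⁻¹ a, ?_⟩
  rw [map_smul, ha, smul_smul, ← Units.val_mul, mul_inv_cancel, Units.val_one, one_smul]

theorem exists_sec
    (hnorm : ∀ f g h : G, f = 1 ∨ g = 1 ∨ h = 1 → α f g h = 1)
    (M : RepObj k G α f) (m : M.M) : ∃ F : indV M, indP M f F = F ∧ (F : G → M.M) 1 = m := by
  classical
  choose s hs using fun t => u_surjective hnorm M t m
  let F : G → M.M := fun c => if hc : c ∈ Subgroup.centralizer {f} then s ⟨c, hc⟩ else 0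
  have hF : F ∈ indV M := by
    intro c t
    by_cases hc : c ∈ Subgroup.centralizer {f}
    · have hct : c * (t : G) ∈ Subgroup.centralizer {f} := mul_mem hc t.2
      have e1 : F (c * t) = s ⟨c * t, hct⟩ := dif_pos hct
      have e2 : F c = s ⟨c, hc⟩ := dif_pos hc
      rw [e1, e2]
      apply u_injective hnorm M ⟨c, hc⟩
      rw [hs, map_smul]
      have h1 := LinearMap.congr_fun (M.u_mul ⟨c, hc⟩ t) (s ⟨c * t, hct⟩)
      rw [LinearMap.comp_apply] at h1
      rw [h1, LinearMap.smul_apply]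
      have h2 : M.u (⟨c, hc⟩ * t) (s ⟨c * t, hct⟩) = m := hs ⟨c * t, hct⟩
      rw [h2, smul_smul, ← Units.val_mul, mul_inv_cancel, Units.val_one, one_smul]
    · have hct : c * (t : G) ∉ Subgroup.centralizer {f} := fun h' =>
        hc ((Subgroup.mul_mem_cancel_right _ t.2).1 h')
      have e1 : F (c * t) = 0 := dif_neg hct
      have e2 : F c = 0 := dif_neg hc
      rw [e1, e2]
      simp
  refine ⟨⟨F, hF⟩, ?_, ?_⟩
  · refine Subtype.ext (funext fun c => ?_)
    by_cases hc : c * f * c⁻¹ = f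
    · exact indP_apply_pos M f _ c hc
    · rw [indP_apply_neg M f _ c hc]
      have e : F c = 0 := dif_neg fun h' => hc (cent_conj ⟨c, h'⟩)
      exact e.symm
  · have e1 : F 1 = s 1 := dif_pos (one_mem _)
    have h1 := hs 1
    rw [M.u_one] at h1
    exact e1.trans h1

/-- Evaluation at the identity. -/
noncomputable def evHom (hcoc : ∀ f g h l : G,
      α g h l * α f (g * h) l * α f g h = α (f * g) h l * α f g (h * l))
    (hnorm : ∀ f g h : G, f = 1 ∨ g = 1 ∨ h = 1 → α f g h = 1)
    (M : RepObj k G α f) : RepHom (Dfun.obj (indObj hcoc hnorm M)) M where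
  φ := (LinearMap.proj 1 ∘ₗ (indV M).subtype) ∘ₗ (LinearMap.range (indP M f)).subtype
  comm_u t := by
    refine LinearMap.ext fun (F : LinearMap.range (indP M f)) => ?_
    obtain ⟨F, hF⟩ := F
    change (((aux2 α (t : G) ((t : G)⁻¹ * 1) f)⁻¹ : kˣ) : k) • (F : G → M.M) ((t : G)⁻¹ * 1) =
      M.u t ((F : G → M.M) 1)
    have h1 := F.2 (t : G)⁻¹ t
    have h2 := tau_coc_t hcoc (t : G) (t : G)⁻¹ t
    rw [mul_inv_cancel, inv_mul_cancel, tau_one_left hnorm, tau_one_right hnorm, one_mul,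
      one_mul] at h2
    rw [mul_one, ← h1, h2, smul_smul, ← Units.val_mul, inv_mul_cancel, Units.val_one, one_smul,
      inv_mul_cancel]

theorem evHom_bij (hcoc : ∀ f g h l : G,
      α g h l * α f (g * h) l * α f g h = α (f * g) h l * α f g (h * l))
    (hnorm : ∀ f g h : G, f = 1 ∨ g = 1 ∨ h = 1 → α f g h = 1)
    (M : RepObj k G α f) : Function.Bijective (evHom hcoc hnorm M).φ := by
  constructor
  · rw [injective_iff_map_eq_zero]
    intro (F : LinearMap.range (indP M f)) h0
    obtain ⟨F, F', hF⟩ := F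
    change (F : G → M.M) 1 = 0 at h0
    apply Subtype.ext
    refine Subtype.ext (funext fun c => ?_)
    change (F : G → M.M) c = 0
    by_cases hc : c * f * c⁻¹ = f
    · have hc' : c ∈ Subgroup.centralizer {f} := by
        rw [Subgroup.mem_centralizer_singleton_iff]
        rwa [mul_inv_eq_iff_eq_mul] at hc
      have h1 := F.2 1 ⟨c, hc'⟩
      rw [h0, tau_one_left hnorm, Units.val_one, one_smul, one_mul] at h1
      apply u_injective hnorm M ⟨c, hc'⟩
      rw [h1, map_zero]
    · rw [← hF]
      exact indP_apply_neg M f _ c hc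
  · intro m
    obtain ⟨F, h1, h2⟩ := exists_sec hnorm M m
    exact ⟨⟨F, F, h1⟩, h2⟩

theorem isIso_of_bij {M N : RepObj k G α f} (a : M ⟶ N)
    (h : Function.Bijective (RepHom.φ a)) : IsIso a := by
  let e := LinearEquiv.ofBijective (RepHom.φ a) h
  refine ⟨⟨⟨e.symm.toLinearMap, ?_⟩, ?_, ?_⟩⟩
  · intro g
    refine LinearMap.ext fun x => ?_
    obtain ⟨y, rfl⟩ := e.surjective x
    have h1 : e (M.u g y) = N.u g (e y) := LinearMap.congr_fun (RepHom.comm_u a g) y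
    simp only [LinearMap.comp_apply, LinearEquiv.coe_coe]
    rw [← h1, e.symm_apply_apply, e.symm_apply_apply]
  · apply RepHom.ext
    exact LinearMap.ext fun x => e.symm_apply_apply x
  · apply RepHom.ext
    exact LinearMap.ext fun x => e.apply_symm_apply x

theorem Dfun_essSurj (hcoc : ∀ f g h l : G,
      α g h l * α f (g * h) l * α f g h = α (f * g) h l * α f g (h * l))
    (hnorm : ∀ f g h : G, f = 1 ∨ g = 1 ∨ h = 1 → α f g h = 1) :
    (Dfun : ZfObj k G α f ⥤ RepObj k G α f).EssSurj where
  mem_essImage M := by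
    let a : Dfun.obj (indObj hcoc hnorm M) ⟶ M := evHom hcoc hnorm M
    haveI : IsIso a := isIso_of_bij a (evHom_bij hcoc hnorm M)
    exact ⟨indObj hcoc hnorm M, ⟨asIso a⟩⟩

/-- the category `Z_f(G,α)` of objects of `Z(G,α)` supported on the
conjugacy class of `f` is equivalent, as a `k`-linear category, to the category of
modules over the twisted group algebra `k[C_G(f), α(·,·|f)⁻¹]`, via the (`k`-linear)
functor `Z ↦ Z_f` taking the degree-`f` component. -/
theorem stmt6
    (hcoc : ∀ f g h l : G,
      α g h l * α f (g * h) l * α f g h = α (f * g) h l * α f g (h * l))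
    (hnorm : ∀ f g h : G, f = 1 ∨ g = 1 ∨ h = 1 → α f g h = 1) :
    ∃ e : ZfObj k G α f ≌ RepObj k G α f, e.functor = Dfun := by
  haveI := Dfun_faithful (k := k) (G := G) (α := α) (f := f)
  haveI := Dfun_full (k := k) (G := G) (α := α) (f := f)
  haveI := Dfun_essSurj (k := k) (G := G) (α := α) (f := f) hcoc hnorm
  haveI : (Dfun : ZfObj k G α f ⥤ RepObj k G α f).IsEquivalence := {}
  exact ⟨Dfun.asEquivalence, rfl⟩
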